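/- Under the setup described in the context, the polyhedron Q contains an integral point x ∈ ℤⁿ with c·x = γ_{d_0}; consequently γ_{d_0} ≤ max{c·y : y ∈ conv(Q ∩ ℤⁿ)}. -/

import Mathlib

open Set

/-- A rational polyhedron in `ℝⁿ`: the solution set of a finite system of linear
inequalities with rational data. -/
def IsRationalPolyhedron {n : ℕ} (Q : Set (Fin n → ℝ)) : Prop :=
  ∃ (m : ℕ) (A : Matrix (Fin m) (Fin n) ℚ) (b : Fin m → ℚ),
    Q = {x | ∀ i, ∑ j, (A i j : ℝ) * x j ≤ (b i : ℝ)}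

/-- The recession cone of a set `Q ⊆ ℝⁿ`. -/
def recCone {n : ℕ} (Q : Set (Fin n → ℝ)) : Set (Fin n → ℝ) :=
  {r | ∀ x ∈ Q, ∀ t : ℝ, 0 ≤ t → x + t • r ∈ Q}

/-- The `D`-split closure of a set `Q ⊆ ℝⁿ` for a finite set `D` of integer directions. -/
def splitClosureD {n : ℕ} (D : Finset (Fin n → ℤ)) (Q : Set (Fin n → ℝ)) :
    Set (Fin n → ℝ) :=
  ⋂ d ∈ D, convexHull ℝ {x ∈ Q | ∃ z : ℤ, ∑ i, (d i : ℝ) * x i = (z : ℝ)}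

/-- The integer hull of a set `Q ⊆ ℝⁿ`: the convex hull of its integral points. -/
def integerHull {n : ℕ} (Q : Set (Fin n → ℝ)) : Set (Fin n → ℝ) :=
  convexHull ℝ {x ∈ Q | ∀ i, ∃ z : ℤ, x i = (z : ℝ)}

/-!
Let `wᵢ` be the `i`-th vector of the lattice basis and `P` a stable iterate. A point of the closure
of `P` that maximizes `dᵢ₋₁` has `wᵢ · x ≥ -Mᵢ`, so `γᵢ ≥ (2Mᵢ + 1)γᵢ₋₁ - Mᵢ`. Hence on a slice of
`P` where `dᵢ₋₁ · x` is an integer at most `γᵢ₋₁ - 1`, and trivially on the slice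
`dᵢ₋₁ · x = γᵢ₋₁`, one has `(dᵢ - dᵢ₋₁) · x ≤ γᵢ - γᵢ₋₁`. This inequality passes to the split
closure, where it forces a maximizer of `dᵢ` to maximize `dᵢ₋₁` too. So a maximizer of `dₖ`
maximizes every `dᵢ`, and therefore `w₁, …, wₖ` take integer values at it.

The cone `F` of recession directions orthogonal to `c` spans the common kernel of `w₁, …, wₖ`, and a
cone contains a translate of every parallelepiped in its span. Moving along `F` thus makes the
remaining lattice coordinates integral without changing `c · x`.
-/

section IntegerForms

variable {ι : Type*} [Fintype ι]

/-- The linear form `x ↦ ∑ i, e i * x i` on `ℝ^ι` given by an integer vector `e`, as a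
`ℤ`-linear function of `e`. -/
def intForm : (ι → ℤ) →ₗ[ℤ] Module.Dual ℝ (ι → ℝ) :=
  dotProductBilin ℤ ℝ ∘ₗ (Algebra.linearMap ℤ ℝ).compLeft ι

lemma intForm_apply (e : ι → ℤ) (x : ι → ℝ) : intForm e x = ∑ i, (e i : ℝ) * x i := rfl

lemma intForm_single [DecidableEq ι] (i : ι) (x : ι → ℝ) : intForm (Pi.single i 1) x = x i := by
  simp [intForm_apply, Pi.single_apply]

lemma intForm_eq_zero_of_eq_sum {κ : Type*} [Fintype κ] {e : ι → ℤ} {g : κ → ι → ℝ}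
    {lam : κ → ℝ} (he : (fun l => (e l : ℝ)) = ∑ j, lam j • g j) {r : ι → ℝ}
    (hr : ∀ j, g j ⬝ᵥ r = 0) : intForm e r = 0 := by
  change (fun l => (e l : ℝ)) ⬝ᵥ r = 0
  simp [he, sum_dotProduct, hr]

variable {w : ι → ι → ℤ}

lemma exists_int_eq_of_forall_intForm (hw : Submodule.span ℤ (range w) = ⊤) {x : ι → ℝ}
    (hx : ∀ i, ∃ z : ℤ, intForm (w i) x = z) (i : ι) : ∃ z : ℤ, x i = z := by
  classical
  have hspan : Submodule.span ℤ (range w) ≤ Submodule.comap (intForm.flip x) 1 := by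
    rw [Submodule.span_le]
    rintro _ ⟨j, rfl⟩
    obtain ⟨z, hz⟩ := hx j
    exact Submodule.mem_one.2 ⟨z, hz.symm⟩
  obtain ⟨z, hz⟩ := Submodule.mem_one.1 (hspan (hw ▸ Submodule.mem_top : Pi.single i 1 ∈ _))
  exact ⟨z, (intForm_single i x).symm.trans hz.symm⟩

lemma eq_zero_of_forall_intForm_eq_zero (hw : Submodule.span ℤ (range w) = ⊤) {x : ι → ℝ}
    (hx : ∀ i, intForm (w i) x = 0) : x = 0 := by
  classical
  have hflip : intForm.flip x = 0 := LinearMap.ext_on_range hw hx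
  funext i
  exact (intForm_single i x).symm.trans (LinearMap.congr_fun hflip _)

lemma exists_basis_repr_eq_intForm (hw : Submodule.span ℤ (range w) = ⊤) :
    ∃ b : Module.Basis ι ℝ (ι → ℝ), ∀ x i, b.repr x i = intForm (w i) x := by
  have hinj : Function.Injective (LinearMap.pi fun i => intForm (w i)) :=
    (injective_iff_map_eq_zero _).2 fun x hx =>
      eq_zero_of_forall_intForm_eq_zero hw fun i => congrFun hx i
  exact ⟨.ofEquivFun (.ofInjectiveEndo _ hinj), fun x i => rfl⟩

end IntegerForms

section Cones

lemma exists_sub_eq_of_mem_span_pointedCone {R E : Type*} [Ring R] [LinearOrder R]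
    [IsOrderedRing R] [AddCommGroup E] [Module R E] {C : PointedCone R E} {v : E}
    (hv : v ∈ Submodule.span R (C : Set E)) : ∃ a ∈ C, ∃ b ∈ C, a - b = v := by
  induction hv using Submodule.span_induction with
  | mem x hx => exact ⟨x, hx, 0, C.zero_mem, sub_zero x⟩
  | zero => exact ⟨0, C.zero_mem, 0, C.zero_mem, sub_zero 0⟩
  | add x y _ _ hx hy =>
    obtain ⟨a, ha, b, hb, rfl⟩ := hx
    obtain ⟨a', ha', b', hb', rfl⟩ := hy
    exact ⟨a + a', add_mem ha ha', b + b', add_mem hb hb', add_sub_add_comm a a' b b'⟩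
  | smul s x _ hx =>
    obtain ⟨a, ha, b, hb, rfl⟩ := hx
    rcases le_total 0 s with hs | hs
    · exact ⟨s • a, C.smul_mem hs ha, s • b, C.smul_mem hs hb, (smul_sub s a b).symm⟩
    · exact ⟨-s • b, C.smul_mem (neg_nonneg.2 hs) hb, -s • a, C.smul_mem (neg_nonneg.2 hs) ha,
        by rw [smul_sub, neg_smul, neg_smul, neg_sub_neg]⟩

variable {ι E : Type*} [AddCommGroup E] [Module ℝ E] {C : PointedCone ℝ E}

lemma exists_forall_parallelepiped_add_mem [Fintype ι] {v : ι → E}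
    (hv : ∀ i, v i ∈ Submodule.span ℝ (C : Set E)) :
    ∃ s, ∀ y ∈ parallelepiped v, s + y ∈ C := by
  choose a ha b hb hab using fun i => exists_sub_eq_of_mem_span_pointedCone (hv i)
  refine ⟨∑ i, b i, ?_⟩
  rintro _ ⟨θ, ⟨hθ0, hθ1⟩, rfl⟩
  have hcomb : ∑ i, b i + ∑ i, θ i • v i = ∑ i, (θ i • a i + (1 - θ i) • b i) := by
    rw [← Finset.sum_add_distrib]
    refine Finset.sum_congr rfl fun i _ => ?_
    rw [← hab i]
    module
  rw [hcomb]
  exact sum_mem fun i _ =>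
    add_mem (C.smul_mem (hθ0 i) (ha i)) (C.smul_mem (sub_nonneg.2 (hθ1 i)) (hb i))

variable (b : Module.Basis ι ℝ E) {J : Finset ι}

lemma span_eq_span_image_compl_of_card_le [Fintype ι]
    (hC : ∀ r ∈ C, ∀ i ∈ J, b.repr r i = 0)
    (hJ : Fintype.card ι ≤ Module.finrank ℝ (Submodule.span ℝ (C : Set E)) + J.card) :
    Submodule.span ℝ (C : Set E) = Submodule.span ℝ (b '' (J : Set ι)ᶜ) := by
  classical
  have := Module.Finite.of_basis b
  have hfinrank : Module.finrank ℝ (Submodule.span ℝ (b '' (J : Set ι)ᶜ)) = Jᶜ.card := by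
    have hli : LinearIndependent ℝ fun i : (Jᶜ : Finset ι) => b i :=
      b.linearIndependent.comp _ Subtype.val_injective
    rw [image_eq_range, ← Finset.coe_compl]
    exact (finrank_span_eq_card hli).trans (Fintype.card_coe _)
  refine Submodule.eq_of_le_of_finrank_le (Submodule.span_le.2 fun r hr => ?_) ?_
  · exact b.mem_span_image.2 fun i hi hiJ => Finsupp.mem_support_iff.1 hi (hC r hr i hiJ)
  · rw [hfinrank, Finset.card_compl]
    omega

lemma exists_mem_pointedCone_forall_repr_add_eq_int [Finite ι]
    (hC : ∀ r ∈ C, ∀ i ∈ J, b.repr r i = 0)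
    (hJ : ∀ i ∉ J, b i ∈ Submodule.span ℝ (C : Set E))
    {x : E} (hx : ∀ i ∈ J, ∃ z : ℤ, b.repr x i = z) :
    ∃ s ∈ C, ∀ i, ∃ z : ℤ, b.repr (x + s) i = z := by
  classical
  cases nonempty_fintype ι
  let v : ι → E := fun i => if i ∈ J then 0 else b i
  have hv (i : ι) : v i ∈ Submodule.span ℝ (C : Set E) := by
    by_cases hi : i ∈ J <;> simp [v, hi, hJ]
  obtain ⟨s, hs⟩ := exists_forall_parallelepiped_add_mem hv
  let θ : ι → ℝ := fun i => ⌈b.repr (x + s) i⌉ - b.repr (x + s) i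
  have hθ : θ ∈ Icc 0 1 := ⟨fun i => sub_nonneg.2 (Int.le_ceil _),
    fun i => (sub_lt_iff_lt_add'.2 (Int.ceil_lt_add_one _)).le⟩
  have hmem : s + ∑ i, θ i • v i ∈ C := hs _ ((mem_parallelepiped_iff _ _).2 ⟨θ, hθ, rfl⟩)
  refine ⟨_, hmem, fun i => ?_⟩
  by_cases hi : i ∈ J
  · obtain ⟨z, hz⟩ := hx i hi
    exact ⟨z, by rw [map_add, Finsupp.add_apply, hC _ hmem i hi, hz, add_zero]⟩
  · have hrepr : b.repr (∑ j, θ j • v j) i = θ i := by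
      rw [map_sum, Finsupp.finsetSum_apply, Finset.sum_eq_single i]
      · simp [v, hi]
      · intro j _ hji
        by_cases hj : j ∈ J <;> simp [v, hj, hji]
      · simp
    exact ⟨⌈b.repr (x + s) i⌉, by
      rw [← add_assoc, map_add, Finsupp.add_apply, hrepr, add_sub_cancel]⟩

end Cones

section Rounding

variable {ι : Type*} [Fintype ι] {w : ι → ι → ℤ} {J : Finset ι} {C : PointedCone ℝ (ι → ℝ)}

lemma exists_mem_pointedCone_forall_add_eq_int (hw : Submodule.span ℤ (range w) = ⊤)
    (hC : ∀ r ∈ C, ∀ i ∈ J, intForm (w i) r = 0)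
    (hJ : Fintype.card ι ≤ Module.finrank ℝ (Submodule.span ℝ (C : Set (ι → ℝ))) + J.card)
    {x : ι → ℝ} (hx : ∀ i ∈ J, ∃ z : ℤ, intForm (w i) x = z) :
    ∃ s ∈ C, ∀ i, ∃ z : ℤ, (x + s) i = z := by
  classical
  obtain ⟨b, hb⟩ := exists_basis_repr_eq_intForm hw
  simp only [← hb] at hC hx
  have hspan := span_eq_span_image_compl_of_card_le b hC hJ
  obtain ⟨s, hs, hint⟩ := exists_mem_pointedCone_forall_repr_add_eq_int b hC
    (fun i hi => hspan ▸ Submodule.subset_span ⟨i, hi, rfl⟩) hx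
  exact ⟨s, hs, exists_int_eq_of_forall_intForm hw fun i => by simpa only [← hb] using hint i⟩

end Rounding

section IntegerSlices

variable {𝕜 E : Type*} [Field 𝕜] [LinearOrder 𝕜] [IsStrictOrderedRing 𝕜] [AddCommGroup E]
  [Module 𝕜 E] {P S : Set E}

lemma apply_le_of_mem_convexHull {φ : Module.Dual 𝕜 E} {a : 𝕜} (hφ : ∀ y ∈ S, φ y ≤ a) {x : E}
    (hx : x ∈ convexHull 𝕜 S) : φ x ≤ a :=
  convexHull_min hφ (convex_halfSpace_le φ.isLinear a) hx

lemma mul_add_le_of_mem_convexHull_slices {φ ω : Module.Dual 𝕜 E} {M : 𝕜} {p : ℤ} {q : 𝕜}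
    (hM : 0 ≤ M) (hφ : ∀ y ∈ P, φ y ≤ p) (hω : ∀ y ∈ P, ω y ≤ M)
    (hq : ∀ y ∈ P, (2 * M + 1) * φ y + ω y ≤ q) (hpq : (2 * M + 1) * p - M ≤ q) {x : E}
    (hx : x ∈ convexHull 𝕜 {y ∈ P | ∃ z : ℤ, φ y = z}) :
    2 * M * φ x + ω x ≤ q - p := by
  refine apply_le_of_mem_convexHull (φ := (2 * M) • φ + ω) ?_ hx
  rintro y ⟨hy, m, hm⟩
  have hmp : m ≤ p := by exact_mod_cast hm ▸ hφ y hy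
  change 2 * M * φ y + ω y ≤ q - p
  rcases hmp.eq_or_lt with rfl | hlt
  · linarith [hq y hy]
  · have hm1 : (m : 𝕜) ≤ p - 1 := by exact_mod_cast Int.le_sub_one_of_lt hlt
    calc 2 * M * φ y + ω y ≤ 2 * M * (p - 1) + M := by
          rw [hm]
          gcongr
          exact hω y hy
      _ ≤ q - p := by linarith

lemma eq_of_mem_convexHull_slices {φ ω : Module.Dual 𝕜 E} {M : 𝕜} {p : ℤ} {q : 𝕜}
    (hM : 0 ≤ M) (hφ : ∀ y ∈ P, φ y ≤ p) (hω : ∀ y ∈ P, ω y ≤ M)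
    (hq : ∀ y ∈ P, (2 * M + 1) * φ y + ω y ≤ q) (hpq : (2 * M + 1) * p - M ≤ q) {x : E}
    (hx : x ∈ convexHull 𝕜 {y ∈ P | ∃ z : ℤ, φ y = z}) (hxq : (2 * M + 1) * φ x + ω x = q) :
    φ x = p :=
  le_antisymm (apply_le_of_mem_convexHull (fun y hy => hφ y hy.1) hx) <| by
    linarith [mul_add_le_of_mem_convexHull_slices hM hφ hω hq hpq hx]

lemma exists_simultaneous_maximizer {k : ℕ} {φ : Fin (k + 1) → Module.Dual 𝕜 E}
    {ω : Fin k → Module.Dual 𝕜 E} {M : Fin k → 𝕜} {γ : Fin (k + 1) → ℤ}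
    (hφ : ∀ i, φ i.succ = (2 * M i + 1) • φ i.castSucc + ω i) (hM : ∀ i, 0 ≤ M i)
    (hS : ∀ i, S ⊆ convexHull 𝕜 {y ∈ P | ∃ z : ℤ, φ i y = z})
    (hγ : ∀ i, ∀ y ∈ P, φ i y ≤ γ i) (hωP : ∀ i, ∀ y ∈ P, ω i y ≤ M i)
    (hωS : ∀ i, ∀ y ∈ S, φ 0 y = γ 0 → -M i ≤ ω i y) (hmax : ∀ i, ∃ y ∈ S, φ i y = γ i) :
    ∃ x ∈ S, ∀ i, φ i x = γ i := by
  have hφ' (i : Fin k) (y : E) : φ i.succ y = (2 * M i + 1) * φ i.castSucc y + ω i y := by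
    simp [hφ]
  have hγS (i y) (hy : y ∈ S) : φ i y ≤ γ i :=
    apply_le_of_mem_convexHull (fun y hy => hγ i y hy.1) (hS i hy)
  have hdescend (i : Fin (k + 1)) : ∀ x ∈ S, φ i x = γ i → ∀ j ≤ i, φ j x = γ j := by
    induction i using Fin.induction with
    | zero =>
      intro x _ hx j hj
      rwa [Fin.le_zero_iff.1 hj]
    | succ i ih =>
      intro x hxS hx
      obtain ⟨z, hzS, hz⟩ := hmax i.castSucc
      have hgap : (2 * M i + 1) * γ i.castSucc - M i ≤ γ i.succ := by
        have hzω := hωS i z hzS (ih z hzS hz 0 (Fin.zero_le _))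
        have hzγ := hγS i.succ z hzS
        rw [hφ', hz] at hzγ
        linarith
      have hx' : φ i.castSucc x = γ i.castSucc :=
        eq_of_mem_convexHull_slices (hM i) (hγ _) (hωP i) (fun y hy => hφ' i y ▸ hγ i.succ y hy)
          hgap (hS _ hxS) (hφ' i x ▸ hx)
      intro j hj
      rcases hj.eq_or_lt with rfl | hlt
      · exact hx
      · exact ih x hxS hx' j (Fin.le_castSucc_iff.2 hlt)
  obtain ⟨x, hxS, hx⟩ := hmax (Fin.last k)
  exact ⟨x, hxS, fun j => hdescend _ x hxS hx j (Fin.le_last j)⟩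

end IntegerSlices

section Polyhedra

variable {n : ℕ} {Q : Set (Fin n → ℝ)} {D : Finset (Fin n → ℤ)}

lemma IsRationalPolyhedron.convex (hQ : IsRationalPolyhedron Q) : Convex ℝ Q := by
  obtain ⟨m, A, b, rfl⟩ := hQ
  simp only [ofPred_forall]
  exact convex_iInter fun i => convex_halfSpace_le
    (dotProductBilin ℝ ℝ fun j => (A i j : ℝ)).isLinear (b i : ℝ)

lemma splitClosureD_subset_convexHull {e : Fin n → ℤ} (he : e ∈ D) :
    splitClosureD D Q ⊆ convexHull ℝ {x ∈ Q | ∃ z : ℤ, intForm e x = z} :=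
  biInter_subset_of_mem he

lemma splitClosureD_subset (hD : D.Nonempty) (hQ : Convex ℝ Q) : splitClosureD D Q ⊆ Q :=
  let ⟨_, he⟩ := hD
  (splitClosureD_subset_convexHull he).trans (convexHull_min (fun _ hx => hx.1) hQ)

lemma convex_splitClosureD (D : Finset (Fin n → ℤ)) (Q : Set (Fin n → ℝ)) :
    Convex ℝ (splitClosureD D Q) :=
  convex_iInter₂ fun _ _ => convex_convexHull ℝ _

lemma iterate_splitClosureD_subset (hD : D.Nonempty) (hQ : Convex ℝ Q) (t : ℕ) :
    (splitClosureD D)^[t] Q ⊆ Q := by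
  induction t generalizing Q with
  | zero => exact subset_rfl
  | succ t ih => exact (ih (convex_splitClosureD D Q)).trans (splitClosureD_subset hD hQ)

lemma exists_simultaneous_maximizer_splitClosureD {k : ℕ} {d : Fin (k + 1) → Fin n → ℤ}
    {v : Fin k → Fin n → ℤ} {M : Fin k → ℤ} {γ : Fin (k + 1) → ℤ}
    (hd : ∀ i, d i.succ = (2 * M i + 1) • d i.castSucc + v i) (hM : ∀ i, 0 ≤ M i)
    (hdD : ∀ i, d i ∈ D) (hγ : ∀ i, ∀ x ∈ Q, intForm (d i) x ≤ γ i)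
    (hvQ : ∀ i, ∀ x ∈ Q, intForm (v i) x ≤ M i)
    (hvγ : ∀ i, ∀ x ∈ splitClosureD D Q, intForm (d 0) x = γ 0 → -(M i : ℝ) ≤ intForm (v i) x)
    (hmax : ∀ i, ∃ x ∈ splitClosureD D Q, intForm (d i) x = γ i) :
    ∃ x ∈ splitClosureD D Q, (∀ i, intForm (d i) x = γ i) ∧ ∀ i, ∃ z : ℤ, intForm (v i) x = z := by
  have hstep (i : Fin k) : intForm (d i.succ) =
      (2 * M i + 1 : ℝ) • intForm (d i.castSucc) + intForm (v i) := by
    rw [hd, map_add, map_smul, ← Int.cast_smul_eq_zsmul ℝ]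
    push_cast
    rfl
  obtain ⟨x, hx, hxγ⟩ := exists_simultaneous_maximizer hstep (fun i => by exact_mod_cast hM i)
    (fun i => splitClosureD_subset_convexHull (hdD i)) hγ hvQ hvγ hmax
  refine ⟨x, hx, hxγ, fun i => ⟨γ i.succ - (2 * M i + 1) * γ i.castSucc, ?_⟩⟩
  have hxi : (γ i.succ : ℝ) = (2 * M i + 1) * γ i.castSucc + intForm (v i) x := by
    simpa [hxγ] using LinearMap.congr_fun (hstep i) x
  push_cast
  linarith

/-- The recession directions of `Q` in the kernel of a linear form `φ`, as a pointed cone. This is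
the set `F` of the paper when `φ` is the form given by `c`. -/
def recessionKernel (Q : Set (Fin n → ℝ)) (φ : Module.Dual ℝ (Fin n → ℝ)) :
    PointedCone ℝ (Fin n → ℝ) where
  carrier := {r ∈ recCone Q | φ r = 0}
  zero_mem' := ⟨fun x hx t _ => by simpa using hx, map_zero φ⟩
  add_mem' {r s} hr hs := by
    refine ⟨fun x hx t ht => ?_, by simp [hr.2, hs.2]⟩
    simpa [smul_add, add_assoc] using hs.1 _ (hr.1 x hx t ht) t ht
  smul_mem' a r hr := by
    refine ⟨fun x hx t ht => ?_, ?_⟩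
    · simpa [mul_smul] using hr.1 x hx (t * a) (mul_nonneg ht a.2)
    · exact (map_smul φ (a : ℝ) r).trans (by rw [hr.2, smul_zero])

end Polyhedra

lemma bounds_of_eq_max_ceil {M : ℤ} {a b : ℝ} (hM : (M : ℝ) = max 0 (max (⌈-a⌉ : ℝ) (⌈b⌉ : ℝ))) :
    0 ≤ M ∧ -(M : ℝ) ≤ a ∧ b ≤ M := by
  have h : max 0 (max (⌈-a⌉ : ℝ) (⌈b⌉ : ℝ)) ≤ M := hM.ge
  simp only [max_le_iff] at h
  exact ⟨by exact_mod_cast h.1, by linarith [Int.le_ceil (-a)], (Int.le_ceil b).trans h.2.2⟩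

theorem integral_point_claim_general
    {n k : ℕ} (hkn : k ≤ n) {Q : Set (Fin n → ℝ)} (hQ : Convex ℝ Q) {c : Fin n → ℤ}
    (hk : n - Module.finrank ℝ
      (Submodule.span ℝ (recessionKernel Q (intForm c) : Set (Fin n → ℝ))) ≤ k)
    {w : Fin n → Fin n → ℤ} (hw : Submodule.span ℤ (range w) = ⊤)
    (hwF : ∀ r ∈ recessionKernel Q (intForm c), ∀ i : Fin k,
      intForm (w (Fin.castLE hkn i)) r = 0)
    {M : Fin k → ℤ} (hM : ∀ i, 0 ≤ M i)
    {d : Fin (k + 1) → Fin n → ℤ} (hd0 : d 0 = c)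
    (hdi : ∀ i : Fin k, d i.succ = (2 * M i + 1) • d i.castSucc + w (Fin.castLE hkn i))
    {D : Finset (Fin n → ℤ)} (hdD : ∀ i, d i ∈ D) {t : ℕ} {γ : Fin (k + 1) → ℤ}
    (hγ : ∀ i, ∀ x ∈ (splitClosureD D)^[t] Q, intForm (d i) x ≤ γ i)
    (hmax : ∀ i, ∃ x ∈ (splitClosureD D)^[t + 1] Q, intForm (d i) x = γ i)
    (hwQ : ∀ i, ∀ x ∈ Q, intForm (w (Fin.castLE hkn i)) x ≤ M i)
    (hwγ : ∀ i, ∀ x ∈ Q, intForm c x = γ 0 → -(M i : ℝ) ≤ intForm (w (Fin.castLE hkn i)) x) :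
    (∃ x ∈ Q, (∀ i, ∃ z : ℤ, x i = z) ∧ intForm c x = γ 0) ∧
      ∃ y ∈ integerHull Q, γ 0 ≤ intForm c y := by
  subst hd0
  have hP (s : ℕ) : (splitClosureD D)^[s] Q ⊆ Q := iterate_splitClosureD_subset ⟨_, hdD 0⟩ hQ s
  have hS : splitClosureD D ((splitClosureD D)^[t] Q) ⊆ Q := by
    simpa only [Function.iterate_succ_apply'] using hP (t + 1)
  simp only [Function.iterate_succ_apply'] at hmax
  obtain ⟨x, hx, hxγ, hxw⟩ := exists_simultaneous_maximizer_splitClosureD hdi hM hdD hγ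
    (fun i y hy => hwQ i y (hP t hy)) (fun i y hy => hwγ i y (hS hy)) hmax
  obtain ⟨s, hs, hint⟩ := exists_mem_pointedCone_forall_add_eq_int (x := x) hw
    (J := Finset.univ.map (Fin.castLEEmb hkn)) (C := recessionKernel Q (intForm (d 0)))
    (by simpa using hwF) (by simpa using Nat.sub_le_iff_le_add'.1 hk) (by simpa using hxw)
  have hxs : x + s ∈ Q := by simpa using hs.1 x (hS hx) 1 zero_le_one
  have hcxs : intForm (d 0) (x + s) = γ 0 := by rw [map_add, hxγ, hs.2, add_zero]
  exact ⟨⟨x + s, hxs, hint, hcxs⟩, x + s, subset_convexHull ℝ _ ⟨hxs, hint⟩, hcxs.ge⟩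

/-- Claim 4 of the paper: under the setup, `Q` contains an integral point `x` with
`c·x = γ_{d₀}`; consequently `γ_{d₀} ≤ max {c·y : y ∈ conv(Q ∩ ℤⁿ)}`. -/
theorem integral_point_claim
    {n k : ℕ} (hkn : k ≤ n)
    (Q : Set (Fin n → ℝ)) (hQ : IsRationalPolyhedron Q) (hQne : Q.Nonempty)
    (c : Fin n → ℤ) (α : ℝ)
    (hcrec : ∀ r ∈ recCone Q, ∑ i, (c i : ℝ) * r i ≤ 0)
    (hα : {x ∈ Q | α ≤ ∑ i, (c i : ℝ) * x i}.Nonempty)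
    (hFne : {r ∈ recCone Q | ∑ i, (c i : ℝ) * r i = 0}.Nonempty)
    (hk : k = n - Module.finrank ℝ
      (Submodule.span ℝ {r ∈ recCone Q | ∑ i, (c i : ℝ) * r i = 0}))
    (g : Fin k → Fin n → ℝ) (hgind : LinearIndependent ℝ g)
    (hgrec : ∀ j, ∀ r ∈ recCone Q, ∑ i, g j i * r i ≤ 0)
    (hF : {r ∈ recCone Q | ∑ i, (c i : ℝ) * r i = 0} =
          {r ∈ recCone Q | ∀ j, ∑ i, g j i * r i = 0})
    (w : Fin n → Fin n → ℤ)
    (hwbasis : ∀ v : Fin n → ℤ, ∃! lam : Fin n → ℤ, v = ∑ i, lam i • w i)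
    (hwcone : ∀ i : Fin k, ∃ lam : Fin k → ℝ, (∀ j, 0 ≤ lam j) ∧
        (fun l => (w (Fin.castLE hkn i) l : ℝ)) = ∑ j, lam j • g j)
    (μ ν : Fin k → ℝ)
    (hμ : ∀ i, IsLeast ((fun x => ∑ l, (w (Fin.castLE hkn i) l : ℝ) * x l) ''
            {x ∈ Q | α ≤ ∑ i, (c i : ℝ) * x i}) (μ i))
    (hν : ∀ i, IsGreatest ((fun x => ∑ l, (w (Fin.castLE hkn i) l : ℝ) * x l) '' Q) (ν i))
    (M : Fin k → ℤ) (hM : ∀ i, (M i : ℝ) = max 0 (max (⌈-μ i⌉ : ℝ) (⌈ν i⌉ : ℝ)))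
    (d : Fin (k + 1) → Fin n → ℤ)
    (hd0 : d 0 = c)
    (hdi : ∀ i : Fin k, d i.succ = (2 * M i + 1) • d i.castSucc + w (Fin.castLE hkn i))
    (D : Finset (Fin n → ℤ)) (hD : D = Finset.image d Finset.univ)
    (hne : ∀ t : ℕ, ((splitClosureD D)^[t] Q).Nonempty)
    (u : ℕ → (Fin n → ℤ) → ℝ)
    (hu : ∀ t : ℕ, ∀ e ∈ D,
      IsGreatest ((fun x => ∑ i, (e i : ℝ) * x i) '' (splitClosureD D)^[t] Q) (u t e))
    (tD : ℕ) (γ : Fin (k + 1) → ℤ)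
    (hγ : ∀ i : Fin (k + 1), ∀ t ≥ tD, u t (d i) = (γ i : ℝ))
    (hγ0 : α ≤ (γ 0 : ℝ)) :
    (∃ x ∈ Q, (∀ i, ∃ z : ℤ, x i = (z : ℝ)) ∧ ∑ i, (c i : ℝ) * x i = (γ 0 : ℝ)) ∧
      ∃ y ∈ integerHull Q, (γ 0 : ℝ) ≤ ∑ i, (c i : ℝ) * y i := by
  have hw : Submodule.span ℤ (range w) = ⊤ := Submodule.eq_top_iff'.2 fun v =>
    (Submodule.mem_span_range_iff_exists_fun ℤ).2 ((hwbasis v).exists.imp fun _ h => h.symm)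
  have hwF : ∀ r ∈ recessionKernel Q (intForm c), ∀ i, intForm (w (Fin.castLE hkn i)) r = 0 :=
    fun r hr i =>
      let ⟨_, _, hlam⟩ := hwcone i
      intForm_eq_zero_of_eq_sum hlam (hF.subset hr).2
  have hdD (i) : d i ∈ D := by simp [hD]
  have hbounds (i) := bounds_of_eq_max_ceil (hM i)
  refine integral_point_claim_general hkn hQ.convex hk.ge hw hwF (fun i => (hbounds i).1) hd0 hdi
    hdD (t := tD) (fun i x hx => ?_) (fun i => ?_) (fun i x hx => ?_) (fun i x hx hcx => ?_)
  · exact hγ i tD le_rfl ▸ (hu tD _ (hdD i)).2 ⟨x, hx, rfl⟩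
  · exact hγ i (tD + 1) (Nat.le_succ tD) ▸ (hu (tD + 1) _ (hdD i)).1
  · exact ((hν i).2 ⟨x, hx, rfl⟩).trans (hbounds i).2.2
  · exact (hbounds i).2.1.trans ((hμ i).2 ⟨x, ⟨hx, hγ0.trans hcx.ge⟩, rfl⟩)
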